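/- arXiv:1404.7056 — 2 statements merged into one kernel-verified Lean document; each statement's English description precedes it below -/
import Mathlib

section
/- Suppose that P is proper (every closed bounded subset of P is compact) and that Ω ⊆ P is open. Assume that ‖·‖_X is absolutely continuous and that ‖χ_E‖_X < ∞ for every measurable E ⊆ P with μ(E) < ∞. If locally Lipschitz functions are dense in N¹X(P), then locally Lipschitz functions on Ω are dense in N¹X(Ω): for every u ∈ N¹X(Ω) and ε > 0 there is a locally Lipschitz v : Ω → ℝ with ‖u − v‖_{N¹X(Ω)} ≤ ε. -/
/-!
Let `ρ` be a Lipschitz function with `Ω = {0 < ρ}`. Truncating `2 ^ n * ρ - 1` to `[0, 1]` gives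
cutoffs `η n` supported inside `Ω`, with `η (n + 1) = 1` where `η n ≠ 0`, so the differences
`φ k = η (k + 1) - η k` form a locally finite partition of unity of `Ω` and `φ k * η (k + 2) = φ k`.
By the Leibniz rule `η (k + 2) * u` belongs to `N¹X(P)`, hence has a locally Lipschitz approximant
`f k`, and `v = ∑ φ k * f k` satisfies `u - v = ∑ φ k * (η (k + 2) * u - f k)` on `Ω`. The Leibniz
rule bounds each term, the Riesz–Fischer property bounds the sum, and the tolerance for `f k` is
fixed only after the Lipschitz constant of `φ k` is known.

The Leibniz rule with gradient `g + L * |u|` needs no absolute continuity of `u` along curves: the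
increment of the product over an arc is expanded around a time at which `|u|` does not exceed its
mean over the arc.
-/

open MeasureTheory Filter Set Topology Metric ENNReal
open scoped NNReal

noncomputable section

/-- A (non-constant, rectifiable) curve in `P`, parametrized by arc length. -/
structure Curve (P : Type*) [PseudoMetricSpace P] where
  len : ℝ
  len_pos : 0 < len
  toFun : ℝ → P
  lip : LipschitzOnWith 1 toFun (Set.Icc 0 len)

variable {P : Type*}

/-- The curve integral `∫_γ ρ ds`. -/
def curveLint [PseudoMetricSpace P] (γ : Curve P) (ρ : P → ℝ≥0∞) : ℝ≥0∞ :=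
  ∫⁻ t in Set.Icc (0 : ℝ) γ.len, ρ (γ.toFun t)

/-- `g` is an upper gradient of `u`. -/
def IsUpperGradient [PseudoMetricSpace P] [MeasurableSpace P]
    (u : P → EReal) (g : P → ℝ≥0∞) : Prop :=
  Measurable g ∧
    ∀ γ : Curve P, (u (γ.toFun 0) - u (γ.toFun γ.len)).abs ≤ curveLint γ g

/-- A quasi-Banach function lattice over `(P, μ)` with continuous quasi-norm. -/
structure QBFL (P : Type*) [MeasurableSpace P] (μ : MeasureTheory.Measure P) where
  nrm : (P → EReal) → ℝ≥0∞
  cc : ℝ≥0∞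
  one_le_cc : 1 ≤ cc
  cc_lt_top : cc < ⊤
  nrm_eq_zero_iff : ∀ u : P → EReal, Measurable u → (nrm u = 0 ↔ u =ᵐ[μ] 0)
  nrm_smul : ∀ (a : ℝ) (u : P → EReal),
    nrm (fun x => (a : EReal) * u x) = ENNReal.ofReal |a| * nrm u
  nrm_triangle : ∀ u v : P → EReal,
    nrm (fun x => u x + v x) ≤ cc * (nrm u + nrm v)
  nrm_mono : ∀ u v : P → EReal, (∀ᵐ x ∂μ, (u x).abs ≤ (v x).abs) → nrm u ≤ nrm v
  nrm_rieszFischer : ∀ f : ℕ → P → EReal, (∀ n, ∀ᵐ x ∂μ, 0 ≤ f n x) →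
    nrm (fun x => ∑' n, f n x) ≤ ∑' n, cc ^ (n + 1) * nrm (f n)
  nrm_continuous : ∀ (f : ℕ → P → EReal) (u : P → EReal),
    Tendsto (fun n => nrm fun x => f n x - u x) atTop (𝓝 0) →
    Tendsto (fun n => nrm (f n)) atTop (𝓝 (nrm u))

variable [MetricSpace P] [MeasurableSpace P] {μ : MeasureTheory.Measure P}

/-- The quasi-norm applied to a `ℝ≥0∞`-valued function. -/
def QBFL.nrmE (X : QBFL P μ) (g : P → ℝ≥0∞) : ℝ≥0∞ :=
  X.nrm fun x => (g x : EReal)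

/-- The Newtonian quasi-seminorm `‖u‖_{N¹X}`. -/
def QBFL.newt (X : QBFL P μ) (u : P → EReal) : ℝ≥0∞ :=
  X.nrm u + ⨅ g ∈ {g : P → ℝ≥0∞ | IsUpperGradient u g}, X.nrmE g

/-- Membership in the Newtonian space `N¹X`. -/
def QBFL.memN1 (X : QBFL P μ) (u : P → EReal) : Prop :=
  Measurable u ∧ X.newt u < ⊤

/-- The Sobolev capacity `C_X`. -/
def QBFL.cap (X : QBFL P μ) (E : Set P) : ℝ≥0∞ :=
  ⨅ u ∈ {u : P → EReal | X.memN1 u ∧ ∀ x ∈ E, 1 ≤ u x}, X.newt u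


/-- `‖·‖_X` is absolutely continuous. -/
def QBFL.HasACNorm (X : QBFL P μ) : Prop :=
  ∀ u : P → EReal, Measurable u → X.nrm u < ⊤ →
    ∀ E : ℕ → Set P, (∀ n, MeasurableSet (E n)) → Antitone E → μ (⋂ n, E n) = 0 →
      Tendsto (fun n => X.nrm ((E n).indicator u)) atTop (𝓝 0)

/-- The quasi-norm of `X(Ω)`: `‖u‖_{X(Ω)} = ‖u χ_Ω‖_X`. -/
def QBFL.nrmOn (X : QBFL P μ) (Ω : Set P) (u : P → EReal) : ℝ≥0∞ :=
  X.nrm (Ω.indicator u)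

/-- `g` is an upper gradient of `u` in `Ω`: the upper gradient inequality holds along all
curves of `P` whose image lies in `Ω`. -/
def IsUpperGradientOn (Ω : Set P) (u : P → EReal) (g : P → ℝ≥0∞) : Prop :=
  Measurable g ∧
    ∀ γ : Curve P, (∀ t ∈ Set.Icc (0 : ℝ) γ.len, γ.toFun t ∈ Ω) →
      (u (γ.toFun 0) - u (γ.toFun γ.len)).abs ≤ curveLint γ g

/-- The Newtonian quasi-seminorm of `N¹X(Ω)`. -/
def QBFL.newtOn (X : QBFL P μ) (Ω : Set P) (u : P → EReal) : ℝ≥0∞ :=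
  X.nrmOn Ω u + ⨅ g ∈ {g : P → ℝ≥0∞ | IsUpperGradientOn Ω u g},
    X.nrmOn Ω (fun x => (g x : EReal))

section ExtendedReal

variable {ι : Type*}

lemma ereal_abs_coe (r : ℝ) : (r : EReal).abs = ‖r‖ₑ := by
  rw [EReal.abs_def, Real.enorm_eq_ofReal_abs]

lemma ereal_abs_coe_ennreal (a : ℝ≥0∞) : (a : EReal).abs = a := by
  induction a with
  | top => rfl
  | coe a => exact (ereal_abs_coe a).trans (Real.enorm_of_nonneg a.2 ▸ ENNReal.ofReal_coe_nnreal)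

lemma ereal_abs_ne_top_iff {x : EReal} : x.abs ≠ ⊤ ↔ x ≠ ⊤ ∧ x ≠ ⊥ := by
  induction x <;> simp [ereal_abs_coe]

lemma ereal_abs_sub_eq_top {x y : EReal} (h : x.abs = ⊤ ∨ y.abs = ⊤) : (x - y).abs = ⊤ := by
  induction x <;> induction y <;> simp_all [ereal_abs_coe]

lemma ereal_abs_sub_le (x y : EReal) : (x - y).abs ≤ x.abs + y.abs := by
  induction x <;> induction y <;> simp [ereal_abs_coe, ← EReal.coe_sub, enorm_sub_le]

lemma measurable_ereal_abs : Measurable EReal.abs :=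
  EReal.measurable_of_measurable_real (by simpa only [ereal_abs_coe] using measurable_enorm)

lemma ereal_tsum_coe_ennreal (a : ι → ℝ≥0∞) :
    ∑' i, (a i : EReal) = ((∑' i, a i : ℝ≥0∞) : EReal) := by
  let coeHom : ℝ≥0∞ →+ EReal :=
    { toFun := fun x => (x : EReal)
      map_zero' := rfl
      map_add' := EReal.coe_ennreal_add }
  exact (ENNReal.summable.hasSum.map coeHom continuous_coe_ennreal_ereal).tsum_eq

/-- `z` is the sum of the extended reals `w i`, provided that these are all finite. Nothing is asked
of `z` when some `w i` is infinite: any difference involving that `w i` is infinite in absolute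
value, so the bounds `SumsTo.abs_le` and `SumsTo.abs_sub_le` still hold. -/
def SumsTo (w : ι → EReal) (z : EReal) : Prop :=
  (∀ i, (w i).abs ≠ ⊤) → ∃ s : ℝ, z = s ∧ HasSum (fun i => (w i).toReal) s

lemma SumsTo.abs_le {w : ι → EReal} {z : EReal} (h : SumsTo w z) : z.abs ≤ ∑' i, (w i).abs := by
  by_cases hw : ∀ i, (w i).abs ≠ ⊤
  · obtain ⟨s, rfl, hs⟩ := h hw
    lift w to ι → ℝ using fun i => ereal_abs_ne_top_iff.1 (hw i)
    simp only [EReal.toReal_coe] at hs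
    simpa only [ereal_abs_coe, hs.tsum_eq] using enorm_tsum_le_tsum_enorm (f := w)
  · push Not at hw
    obtain ⟨i, hi⟩ := hw
    exact le_top.trans (hi ▸ ENNReal.le_tsum i)

lemma SumsTo.abs_sub_le {w w' : ι → EReal} {z z' : EReal} (h : SumsTo w z) (h' : SumsTo w' z') :
    (z - z').abs ≤ ∑' i, (w i - w' i).abs := by
  refine SumsTo.abs_le fun hsub => ?_
  have hw : ∀ i, (w i).abs ≠ ⊤ := fun i hi => hsub i (ereal_abs_sub_eq_top (Or.inl hi))
  have hw' : ∀ i, (w' i).abs ≠ ⊤ := fun i hi => hsub i (ereal_abs_sub_eq_top (Or.inr hi))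
  obtain ⟨s, rfl, hs⟩ := h hw
  obtain ⟨s', rfl, hs'⟩ := h' hw'
  lift w to ι → ℝ using fun i => ereal_abs_ne_top_iff.1 (hw i)
  lift w' to ι → ℝ using fun i => ereal_abs_ne_top_iff.1 (hw' i)
  exact ⟨s - s', (EReal.coe_sub s s').symm, hs.sub hs'⟩

lemma sumsTo_mul_sub {a b c : ι → ℝ} {s : ℝ} (x : EReal) (ha : HasSum a 1)
    (hab : ∀ i, a i * b i = a i) (hac : HasSum (fun i => a i * c i) s) :
    SumsTo (fun i => (a i : EReal) * ((b i : EReal) * x - (c i : EReal))) (x - s) := by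
  intro hfin
  have hx : x.abs ≠ ⊤ := by
    intro hx
    obtain ⟨i, hi⟩ : ∃ i, a i ≠ 0 := by
      by_contra! h
      obtain rfl : a = 0 := funext h
      exact one_ne_zero (ha.unique hasSum_zero)
    have hbi : b i = 1 := mul_left_cancel₀ hi ((hab i).trans (mul_one _).symm)
    refine hfin i ?_
    rw [EReal.abs_mul, hbi, EReal.coe_one, one_mul, ereal_abs_sub_eq_top (Or.inl hx)]
    exact ENNReal.mul_top (by simpa [ereal_abs_coe] using hi)
  lift x to ℝ using ereal_abs_ne_top_iff.1 hx
  refine ⟨x - s, (EReal.coe_sub x s).symm, ?_⟩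
  have hterm : ∀ i, a i * (b i * x - c i) = a i * x - a i * c i := fun i => by
    rw [mul_sub, ← mul_assoc, hab]
  have := (ha.mul_right x).sub hac
  simpa only [← EReal.coe_mul, ← EReal.coe_sub, EReal.toReal_coe, hterm, one_mul] using this

end ExtendedReal

section Interval

variable {a b : ℝ} {G : ℝ → ℝ≥0∞} {Φ : ℝ → ℝ} {L : ℝ≥0}

lemma enorm_smul_sub_smul_le_setLIntegral {E : Type*} [NormedAddCommGroup E] [NormedSpace ℝ E]
    {f : ℝ → E} (hab : a < b) (hf : AEMeasurable (fun t => ‖f t‖ₑ) (volume.restrict (Ioc a b)))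
    (hfG : ∀ s t, a ≤ s → s ≤ t → t ≤ b → ‖f s - f t‖ₑ ≤ ∫⁻ r in Ioc s t, G r)
    (hΦ : LipschitzOnWith L Φ (Icc a b)) (hΦ1 : ∀ t ∈ Icc a b, |Φ t| ≤ 1) :
    ‖Φ a • f a - Φ b • f b‖ₑ ≤ ∫⁻ t in Ioc a b, (G t + L * ‖f t‖ₑ) := by
  obtain ⟨t, ht, hmean⟩ := exists_le_setLAverage (μ := volume) (by simp [hab]) (by simp) hf
  have hlen : edist a b * ‖f t‖ₑ ≤ ∫⁻ r in Ioc a b, ‖f r‖ₑ := by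
    rwa [setLAverage_eq, ENNReal.le_div_iff_mul_le (by simp [hab]) (by simp), mul_comm,
      Real.volume_Ioc, ← abs_of_pos (sub_pos.2 hab), ← Real.dist_eq, ← edist_dist,
      edist_comm] at hmean
  have haI : a ∈ Icc a b := left_mem_Icc.2 hab.le
  have hbI : b ∈ Icc a b := right_mem_Icc.2 hab.le
  have hΦe : ∀ r ∈ Icc a b, ‖Φ r‖ₑ ≤ 1 := fun r hr => by
    rw [Real.enorm_eq_ofReal_abs]
    exact ENNReal.ofReal_le_one.2 (hΦ1 r hr)
  have hsplit : Φ a • f a - Φ b • f b =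
      Φ a • (f a - f t) + Φ b • (f t - f b) + (Φ a - Φ b) • f t := by
    simp only [smul_sub, sub_smul]
    abel
  calc ‖Φ a • f a - Φ b • f b‖ₑ
      ≤ ‖Φ a‖ₑ * ‖f a - f t‖ₑ + ‖Φ b‖ₑ * ‖f t - f b‖ₑ + ‖Φ a - Φ b‖ₑ * ‖f t‖ₑ := by
        simp only [hsplit, ← enorm_smul]
        exact (enorm_add_le _ _).trans (add_le_add (enorm_add_le _ _) le_rfl)
    _ ≤ 1 * (∫⁻ r in Ioc a t, G r) + 1 * (∫⁻ r in Ioc t b, G r) + L * edist a b * ‖f t‖ₑ := by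
        rw [← edist_eq_enorm_sub (Φ a)]
        gcongr
        · exact hΦe a haI
        · exact hfG a t le_rfl ht.1.le ht.2
        · exact hΦe b hbI
        · exact hfG t b ht.1.le ht.2 le_rfl
        · exact hΦ haI hbI
    _ ≤ (∫⁻ r in Ioc a b, G r) + L * ∫⁻ r in Ioc a b, ‖f r‖ₑ := by
        rw [one_mul, one_mul, mul_assoc,
          ← lintegral_union measurableSet_Ioc (Ioc_disjoint_Ioc_of_le le_rfl),
          Ioc_union_Ioc_eq_Ioc ht.1.le ht.2]
        gcongr
    _ = ∫⁻ t in Ioc a b, (G t + L * ‖f t‖ₑ) := by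
        rw [lintegral_add_right' _ (hf.const_mul _), lintegral_const_mul'' _ hf]

lemma abs_ne_top_of_abs_sub_le_setLIntegral {W : ℝ → EReal} (hab : a < b)
    (hWG : ∀ s t, a ≤ s → s < t → t ≤ b → (W s - W t).abs ≤ ∫⁻ r in Ioc s t, G r)
    (hG : ∫⁻ r in Ioc a b, G r ≠ ⊤) {t : ℝ} (ht : t ∈ Icc a b) : (W t).abs ≠ ⊤ := by
  intro htop
  refine hG (top_le_iff.1 ?_)
  rcases ht.1.eq_or_lt with rfl | hat
  · exact (ereal_abs_sub_eq_top (Or.inl htop)).ge.trans (hWG a b le_rfl hab le_rfl)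
  · exact ((ereal_abs_sub_eq_top (Or.inr htop)).ge.trans (hWG a t le_rfl hat ht.2)).trans
      (lintegral_mono_set (Ioc_subset_Ioc_right ht.2))

lemma abs_mul_sub_mul_le_setLIntegral {W : ℝ → EReal} (hab : a < b)
    (hW : AEMeasurable (fun t => (W t).abs) (volume.restrict (Ioc a b)))
    (hWG : ∀ s t, a ≤ s → s < t → t ≤ b → (W s - W t).abs ≤ ∫⁻ r in Ioc s t, G r)
    (hΦ : LipschitzOnWith L Φ (Icc a b)) (hΦ1 : ∀ t ∈ Icc a b, |Φ t| ≤ 1) :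
    ((Φ a : EReal) * W a - (Φ b : EReal) * W b).abs ≤ ∫⁻ t in Ioc a b, (G t + L * (W t).abs) := by
  by_cases hG : ∫⁻ r in Ioc a b, G r = ⊤
  · refine le_top.trans (hG.ge.trans ?_)
    gcongr
    exact le_self_add
  have hcoe : ∀ t ∈ Icc a b, W t = ((W t).toReal : EReal) := fun t ht => by
    have hfin := ereal_abs_ne_top_iff.1 (abs_ne_top_of_abs_sub_le_setLIntegral hab hWG hG ht)
    exact (EReal.coe_toReal hfin.1 hfin.2).symm
  have habs : ∀ t ∈ Ioc a b, (W t).abs = ‖(W t).toReal‖ₑ := fun t ht => by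
    rw [← ereal_abs_coe, ← hcoe t (Ioc_subset_Icc_self ht)]
  have hincr : ∀ s t, a ≤ s → s ≤ t → t ≤ b →
      ‖(W s).toReal - (W t).toReal‖ₑ ≤ ∫⁻ r in Ioc s t, G r := by
    intro s t has hst htb
    rcases hst.eq_or_lt with rfl | hst'
    · simp
    rw [← ereal_abs_coe, EReal.coe_sub, ← hcoe s ⟨has, hst.trans htb⟩,
      ← hcoe t ⟨has.trans hst, htb⟩]
    exact hWG s t has hst' htb
  have hmeas : AEMeasurable (fun t => ‖(W t).toReal‖ₑ) (volume.restrict (Ioc a b)) :=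
    hW.congr (ae_restrict_of_forall_mem measurableSet_Ioc habs)
  have hreal := enorm_smul_sub_smul_le_setLIntegral hab hmeas hincr hΦ hΦ1
  rw [hcoe a (left_mem_Icc.2 hab.le), hcoe b (right_mem_Icc.2 hab.le), ← EReal.coe_mul,
    ← EReal.coe_mul, ← EReal.coe_sub, ereal_abs_coe]
  refine hreal.trans_eq (setLIntegral_congr_fun measurableSet_Ioc fun t ht => ?_)
  simp only [habs t ht]

-- Cut `[a, b]` at the first and at the last point of `Z`.
lemma abs_sub_le_setLIntegral_of_zeros {F : ℝ → EReal} {Z : Set ℝ} (hZ : IsClosed Z)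
    (hF : ∀ t ∈ Z, F t = 0) (hab : a < b)
    (hFG : ∀ s t, a ≤ s → s < t → t ≤ b → Disjoint (Ioo s t) Z →
      (F s - F t).abs ≤ ∫⁻ r in Ioc s t, G r) :
    (F a - F b).abs ≤ ∫⁻ r in Ioc a b, G r := by
  rcases (Icc a b ∩ Z).eq_empty_or_nonempty with hempty | hne
  · refine hFG a b le_rfl hab le_rfl ?_
    exact (disjoint_iff_inter_eq_empty.2 hempty).mono_left Ioo_subset_Icc_self
  have hcompact : IsCompact (Icc a b ∩ Z) := isCompact_Icc.inter_right hZ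
  obtain ⟨s, ⟨hs, hsZ⟩, hsmin⟩ := hcompact.exists_isLeast hne
  obtain ⟨t, ⟨ht, htZ⟩, htmax⟩ := hcompact.exists_isGreatest hne
  have hFa : (F a).abs ≤ ∫⁻ r in Ioc a s, G r := by
    rcases hs.1.eq_or_lt with rfl | has
    · simp [hF a hsZ]
    · have hdisj : Disjoint (Ioo a s) Z := Set.disjoint_left.2 fun r hr hrZ =>
        (hsmin ⟨⟨hr.1.le, hr.2.le.trans hs.2⟩, hrZ⟩).not_gt hr.2
      simpa [hF s hsZ] using hFG a s le_rfl has hs.2 hdisj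
  have hFb : (F b).abs ≤ ∫⁻ r in Ioc t b, G r := by
    rcases ht.2.eq_or_lt with rfl | htb
    · simp [hF t htZ]
    · have hdisj : Disjoint (Ioo t b) Z := Set.disjoint_left.2 fun r hr hrZ =>
        (htmax ⟨⟨ht.1.trans hr.1.le, hr.2.le⟩, hrZ⟩).not_gt hr.1
      simpa [hF t htZ] using hFG t b ht.1 htb le_rfl hdisj
  calc (F a - F b).abs ≤ (F a).abs + (F b).abs := ereal_abs_sub_le _ _
    _ ≤ (∫⁻ r in Ioc a s, G r) + ∫⁻ r in Ioc t b, G r := add_le_add hFa hFb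
    _ = ∫⁻ r in Ioc a s ∪ Ioc t b, G r :=
        (lintegral_union measurableSet_Ioc (Ioc_disjoint_Ioc_of_le (hsmin ⟨ht, htZ⟩))).symm
    _ ≤ ∫⁻ r in Ioc a b, G r :=
        lintegral_mono_set (union_subset (Ioc_subset_Ioc_right hs.2) (Ioc_subset_Ioc_left ht.1))

end Interval

section LocallyLipschitz

variable {α : Type*} [PseudoEMetricSpace α]

lemma locallyLipschitz_mul {f g : α → ℝ} (hf : LocallyLipschitz f) (hg : LocallyLipschitz g) :
    LocallyLipschitz fun x => f x * g x :=
  (contDiff_fst.mul contDiff_snd : ContDiff ℝ 1 fun p : ℝ × ℝ => p.1 * p.2).locallyLipschitz.comp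
    (hf.prodMk hg)

lemma locallyLipschitz_sum_range {E : Type*} [SeminormedAddCommGroup E] {F : ℕ → α → E}
    (hF : ∀ k, LocallyLipschitz (F k)) (n : ℕ) :
    LocallyLipschitz fun x => ∑ k ∈ Finset.range n, F k x := by
  induction n with
  | zero => simpa only [Finset.sum_range_zero] using LocallyLipschitz.const (0 : E)
  | succ n ih => simpa only [Finset.sum_range_succ] using ih.add (hF n)

lemma locallyLipschitzOn_tsum {E : Type*} [SeminormedAddCommGroup E] {F : ℕ → α → E} {s : Set α}
    (hF : ∀ k, LocallyLipschitz (F k))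
    (hzero : ∀ x ∈ s, ∃ N, ∀ᶠ y in 𝓝 x, ∀ k ≥ N, F k y = 0) :
    LocallyLipschitzOn s fun x => ∑' k, F k x := by
  intro x hx
  obtain ⟨N, hN⟩ := hzero x hx
  obtain ⟨K, t, ht, hK⟩ := locallyLipschitz_sum_range hF N x
  refine ⟨K, t ∩ {y | ∀ k ≥ N, F k y = 0}, mem_nhdsWithin_of_mem_nhds (inter_mem ht hN), ?_⟩
  have htsum : ∀ y ∈ t ∩ {y | ∀ k ≥ N, F k y = 0},
      ∑' k, F k y = ∑ k ∈ Finset.range N, F k y := fun y hy =>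
    tsum_eq_sum fun k hk => hy.2 k (by simpa using hk)
  intro y hy z hz
  simpa only [htsum y hy, htsum z hz] using hK hy.1 hz.1

end LocallyLipschitz

section Cutoffs

variable {α : Type*} {ρ : α → ℝ}

lemma exists_lipschitz_pos_iff_mem [PseudoMetricSpace α] {Ω : Set α} (hΩ : IsOpen Ω) :
    ∃ ρ : α → ℝ, LipschitzWith 1 ρ ∧ (∀ x, ρ x ≤ 1) ∧ ∀ x, 0 < ρ x ↔ x ∈ Ω := by
  rcases Ωᶜ.eq_empty_or_nonempty with hempty | hne
  · rw [compl_empty_iff] at hempty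
    exact ⟨fun _ => 1, LipschitzWith.const' 1, fun _ => le_rfl, by simp [hempty]⟩
  · refine ⟨fun x => min (infDist x Ωᶜ) 1, (lipschitz_infDist_pt Ωᶜ).min_const 1,
      fun x => min_le_right _ _, fun x => ?_⟩
    rw [lt_min_iff, ← hΩ.isClosed_compl.notMem_iff_infDist_pos hne, notMem_compl_iff,
      and_iff_left one_pos]

/-- The truncation to `[0, 1]` of `2 ^ n * ρ - 1`, a cutoff function for `{x | 0 < ρ x}`. -/
def dyadicCutoff (ρ : α → ℝ) (n : ℕ) (x : α) : ℝ :=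
  max 0 (min 1 (2 ^ n * ρ x - 1))

lemma dyadicCutoff_nonneg (n : ℕ) (x : α) : 0 ≤ dyadicCutoff ρ n x :=
  le_max_left _ _

lemma dyadicCutoff_le_one (n : ℕ) (x : α) : dyadicCutoff ρ n x ≤ 1 :=
  max_le zero_le_one (min_le_left _ _)

lemma abs_dyadicCutoff_le_one (n : ℕ) (x : α) : |dyadicCutoff ρ n x| ≤ 1 :=
  abs_le.2 ⟨by linarith [dyadicCutoff_nonneg (ρ := ρ) n x], dyadicCutoff_le_one n x⟩

lemma dyadicCutoff_eq_one {n : ℕ} {x : α} (h : 2 ≤ 2 ^ n * ρ x) : dyadicCutoff ρ n x = 1 := by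
  rw [dyadicCutoff, min_eq_left (by linarith), max_eq_right zero_le_one]

lemma one_lt_of_dyadicCutoff_ne_zero {n : ℕ} {x : α} (h : dyadicCutoff ρ n x ≠ 0) :
    1 < 2 ^ n * ρ x := by
  contrapose! h
  exact max_eq_left ((min_le_right _ _).trans (by linarith))

lemma dyadicCutoff_succ_eq_one {n : ℕ} {x : α} (h : dyadicCutoff ρ n x ≠ 0) :
    dyadicCutoff ρ (n + 1) x = 1 := by
  refine dyadicCutoff_eq_one ?_
  rw [pow_succ']
  linarith [one_lt_of_dyadicCutoff_ne_zero h]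

lemma dyadicCutoff_zero_eq_zero (hρ : ∀ x, ρ x ≤ 1) (x : α) : dyadicCutoff ρ 0 x = 0 := by
  by_contra h
  linarith [one_lt_of_dyadicCutoff_ne_zero h, hρ x]

lemma lipschitzWith_dyadicCutoff [PseudoMetricSpace α] {K : ℝ≥0} (hρ : LipschitzWith K ρ) (n : ℕ) :
    LipschitzWith (2 ^ n * K) (dyadicCutoff ρ n) := by
  have hscale : LipschitzWith (2 ^ n * K) fun x => 2 ^ n * ρ x - 1 :=
    LipschitzWith.of_dist_le_mul fun x y => by
      rw [Real.dist_eq, sub_sub_sub_cancel_right, ← mul_sub, abs_mul, abs_of_pos (by positivity),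
        ← Real.dist_eq]
      push_cast
      rw [mul_assoc]
      exact mul_le_mul_of_nonneg_left (hρ.dist_le_mul x y) (by positivity)
  exact (hscale.const_min 1).const_max 0

lemma tsupport_dyadicCutoff_subset [TopologicalSpace α] (hρ : Continuous ρ) (n : ℕ) :
    tsupport (dyadicCutoff ρ n) ⊆ {x | 0 < ρ x} := by
  have hclosed : IsClosed {x | 1 ≤ 2 ^ n * ρ x} :=
    isClosed_le continuous_const (continuous_const.mul hρ)
  refine (closure_minimal (fun x hx => (one_lt_of_dyadicCutoff_ne_zero hx).le) hclosed).trans ?_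
  intro x (hx : 1 ≤ 2 ^ n * ρ x)
  exact (mul_pos_iff_of_pos_left (by positivity)).1 (one_pos.trans_le hx)

lemma exists_eventually_dyadicCutoff_eq_one [TopologicalSpace α] (hρ : Continuous ρ) {x : α}
    (hx : 0 < ρ x) : ∃ N, ∀ᶠ y in 𝓝 x, ∀ n ≥ N, dyadicCutoff ρ n y = 1 := by
  obtain ⟨N, hN⟩ := pow_unbounded_of_one_lt (2 / ρ x) one_lt_two
  rw [div_lt_iff₀ hx] at hN
  refine ⟨N, ?_⟩
  filter_upwards [(continuous_const.mul hρ).continuousAt.eventually_const_lt hN,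
    hρ.continuousAt.eventually_const_lt hx] with y hyN hy n hn
  refine dyadicCutoff_eq_one (hyN.le.trans (mul_le_mul_of_nonneg_right ?_ hy.le))
  exact pow_le_pow_right₀ one_le_two hn

/-- The increments of the cutoffs `dyadicCutoff ρ`, a partition of unity of `{x | 0 < ρ x}`. -/
def dyadicBump (ρ : α → ℝ) (k : ℕ) (x : α) : ℝ :=
  dyadicCutoff ρ (k + 1) x - dyadicCutoff ρ k x

lemma abs_dyadicBump_le_one (k : ℕ) (x : α) : |dyadicBump ρ k x| ≤ 1 :=
  abs_sub_le_of_nonneg_of_le (dyadicCutoff_nonneg _ x) (dyadicCutoff_le_one _ x)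
    (dyadicCutoff_nonneg _ x) (dyadicCutoff_le_one _ x)

lemma dyadicBump_mul_dyadicCutoff (k : ℕ) (x : α) :
    dyadicBump ρ k x * dyadicCutoff ρ (k + 2) x = dyadicBump ρ k x := by
  by_cases hsucc : dyadicCutoff ρ (k + 1) x = 0
  · have hk : dyadicCutoff ρ k x = 0 := by
      by_contra hk
      exact one_ne_zero ((dyadicCutoff_succ_eq_one hk).symm.trans hsucc)
    rw [dyadicBump, hsucc, hk, sub_zero, zero_mul]
  · rw [dyadicCutoff_succ_eq_one hsucc, mul_one]

lemma dyadicBump_eq_zero {k : ℕ} {x : α} (h : dyadicCutoff ρ k x = 1) : dyadicBump ρ k x = 0 := by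
  rw [dyadicBump, dyadicCutoff_succ_eq_one (h ▸ one_ne_zero), h, sub_self]

lemma lipschitzWith_dyadicBump [PseudoMetricSpace α] {K : ℝ≥0} (hρ : LipschitzWith K ρ) (k : ℕ) :
    LipschitzWith (2 ^ (k + 1) * K + 2 ^ k * K) (dyadicBump ρ k) :=
  (lipschitzWith_dyadicCutoff hρ _).sub (lipschitzWith_dyadicCutoff hρ _)

lemma exists_eventually_dyadicBump_eq_zero [TopologicalSpace α] (hρ : Continuous ρ) {x : α}
    (hx : 0 < ρ x) : ∃ N, ∀ᶠ y in 𝓝 x, ∀ k ≥ N, dyadicBump ρ k y = 0 := by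
  obtain ⟨N, hN⟩ := exists_eventually_dyadicCutoff_eq_one hρ hx
  exact ⟨N, hN.mono fun y hy k hk => dyadicBump_eq_zero (hy k hk)⟩

lemma hasSum_dyadicBump [TopologicalSpace α] (hρ : Continuous ρ) (hρ1 : ∀ x, ρ x ≤ 1) {x : α}
    (hx : 0 < ρ x) : HasSum (fun k => dyadicBump ρ k x) 1 := by
  obtain ⟨N, hN⟩ := exists_eventually_dyadicCutoff_eq_one hρ hx
  have hone := hN.self_of_nhds
  have hpartial : ∑ k ∈ Finset.range N, dyadicBump ρ k x = 1 := by
    simp only [dyadicBump]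
    rw [Finset.sum_range_sub fun k => dyadicCutoff ρ k x, hone N le_rfl,
      dyadicCutoff_zero_eq_zero hρ1, sub_zero]
  rw [← hpartial]
  refine hasSum_sum_of_ne_finset_zero fun k hk => ?_
  exact dyadicBump_eq_zero (hone k (not_lt.1 (Finset.mem_range.not.1 hk)))

end Cutoffs

section Subarc

variable {α : Type*} [PseudoMetricSpace α] {a b : ℝ}

/-- The restriction of the curve `γ` to `[a, b]`, parametrized by `[0, b - a]`. -/
def Curve.subarc (γ : Curve α) (ha : 0 ≤ a) (hab : a < b) (hb : b ≤ γ.len) : Curve α where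
  len := b - a
  len_pos := sub_pos.2 hab
  toFun t := γ.toFun (a + t)
  lip := fun s hs t ht => by
    rw [← edist_add_left a s t]
    exact γ.lip ⟨add_nonneg ha hs.1, (le_sub_iff_add_le'.1 hs.2).trans hb⟩
      ⟨add_nonneg ha ht.1, (le_sub_iff_add_le'.1 ht.2).trans hb⟩

lemma curveLint_subarc (g : α → ℝ≥0∞) (γ : Curve α) (ha : 0 ≤ a) (hab : a < b) (hb : b ≤ γ.len) :
    curveLint (γ.subarc ha hab hb) g = ∫⁻ t in Ioc a b, g (γ.toFun t) := by
  have hshift := (measurePreserving_add_left (volume : Measure ℝ) a).setLIntegral_comp_preimage_emb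
    (measurableEmbedding_addLeft a) (fun t => g (γ.toFun t)) (Icc a b)
  rw [preimage_const_add_Icc, sub_self] at hshift
  exact hshift.trans (setLIntegral_congr Ioc_ae_eq_Icc.symm)

lemma Curve.aemeasurable_comp [MeasurableSpace α] [BorelSpace α] (γ : Curve α)
    {β : Type*} [MeasurableSpace β] {f : α → β} (hf : Measurable f) :
    AEMeasurable (fun t => f (γ.toFun t)) (volume.restrict (Icc 0 γ.len)) :=
  hf.comp_aemeasurable (γ.lip.continuousOn.aemeasurable measurableSet_Icc)

end Subarc

section UpperGradient

variable {α : Type*} [MetricSpace α] [MeasurableSpace α] {Ω : Set α} {u : α → EReal}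
  {g : α → ℝ≥0∞} {φ : α → ℝ} {L : ℝ≥0} {a b : ℝ}

lemma IsUpperGradientOn.abs_sub_le_setLIntegral (hg : IsUpperGradientOn Ω u g) (γ : Curve α)
    (ha : 0 ≤ a) (hab : a < b) (hb : b ≤ γ.len) (hΩ : MapsTo γ.toFun (Icc a b) Ω) :
    (u (γ.toFun a) - u (γ.toFun b)).abs ≤ ∫⁻ t in Ioc a b, g (γ.toFun t) := by
  have hsub := hg.2 (γ.subarc ha hab hb) fun t ht =>
    hΩ ⟨le_add_of_nonneg_right ht.1, le_sub_iff_add_le'.1 ht.2⟩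
  rw [curveLint_subarc] at hsub
  simpa only [Curve.subarc, add_zero, add_sub_cancel] using hsub

variable [BorelSpace α]

lemma IsUpperGradientOn.abs_mul_lipschitz_sub_le_setLIntegral (hg : IsUpperGradientOn Ω u g)
    (hu : Measurable (Ω.indicator u)) (hφ : LipschitzWith L φ) (hφ1 : ∀ x, |φ x| ≤ 1)
    (γ : Curve α) (ha : 0 ≤ a) (hab : a < b) (hb : b ≤ γ.len)
    (hΩ : MapsTo γ.toFun (Icc a b) Ω) :
    ((φ (γ.toFun a) : EReal) * u (γ.toFun a) - (φ (γ.toFun b) : EReal) * u (γ.toFun b)).abs ≤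
      ∫⁻ t in Ioc a b, (Ω.indicator g (γ.toFun t) + L * (Ω.indicator u (γ.toFun t)).abs) := by
  have hsub : Ioc a b ⊆ Icc 0 γ.len :=
    Ioc_subset_Icc_self.trans (Icc_subset_Icc ha hb)
  have hmem : ∀ t ∈ Ioc a b, γ.toFun t ∈ Ω := fun t ht => hΩ (Ioc_subset_Icc_self ht)
  have hu_meas : AEMeasurable (fun t => (u (γ.toFun t)).abs) (volume.restrict (Ioc a b)) := by
    have hind := γ.aemeasurable_comp (measurable_ereal_abs.comp hu)
    refine (hind.mono_set hsub).congr
      (ae_restrict_of_forall_mem measurableSet_Ioc fun t ht => ?_)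
    simp only [Function.comp_apply, indicator_of_mem (hmem t ht)]
  have hΦ : LipschitzOnWith L (fun t => φ (γ.toFun t)) (Icc a b) := by
    simpa only [mul_one, Function.comp_def] using
      hφ.comp_lipschitzOnWith (γ.lip.mono (Icc_subset_Icc ha hb))
  refine (abs_mul_sub_mul_le_setLIntegral (W := fun t => u (γ.toFun t)) hab hu_meas
    (fun s t has hst htb => hg.abs_sub_le_setLIntegral γ (ha.trans has) hst (htb.trans hb)
      (hΩ.mono_left (Icc_subset_Icc has htb))) hΦ fun t _ => hφ1 _).trans_eq ?_
  refine setLIntegral_congr_fun measurableSet_Ioc fun t ht => ?_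
  simp only [indicator_of_mem (hmem t ht)]

-- Between two consecutive zeros of `φ` a curve stays in `tsupport φ`, hence in `Ω`.
lemma IsUpperGradientOn.mul_lipschitz (hg : IsUpperGradientOn Ω u g) (hΩ : MeasurableSet Ω)
    (hu : Measurable (Ω.indicator u)) (hφ : LipschitzWith L φ) (hφ1 : ∀ x, |φ x| ≤ 1)
    (hsupp : tsupport φ ⊆ Ω) :
    IsUpperGradient (fun x => (φ x : EReal) * u x)
      (fun x => Ω.indicator g x + L * (Ω.indicator u x).abs) := by
  refine ⟨(hg.1.indicator hΩ).add ((measurable_ereal_abs.comp hu).const_mul _), fun γ => ?_⟩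
  have hφγ : ContinuousOn (fun t => φ (γ.toFun t)) (Icc 0 γ.len) :=
    hφ.continuous.comp_continuousOn γ.lip.continuousOn
  have hZ : IsClosed (Icc 0 γ.len ∩ (fun t => φ (γ.toFun t)) ⁻¹' {0}) :=
    hφγ.preimage_isClosed_of_isClosed isClosed_Icc isClosed_singleton
  rw [curveLint, ← setLIntegral_congr (Ioc_ae_eq_Icc (a := (0 : ℝ)))]
  refine abs_sub_le_setLIntegral_of_zeros
    (F := fun t => (φ (γ.toFun t) : EReal) * u (γ.toFun t)) hZ ?_ γ.len_pos ?_
  · rintro t ⟨-, ht : φ (γ.toFun t) = 0⟩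
    simp only [ht, EReal.coe_zero, zero_mul]
  · intro s t hs hst ht hdisj
    have hγ : ContinuousOn γ.toFun (closure (Ioo s t)) := by
      rw [closure_Ioo hst.ne]
      exact γ.lip.continuousOn.mono (Icc_subset_Icc hs ht)
    have hne : MapsTo γ.toFun (Ioo s t) (Function.support φ) := fun r hr h0 =>
      hdisj.notMem_of_mem_left hr ⟨⟨hs.trans hr.1.le, hr.2.le.trans ht⟩, h0⟩
    have hmem := (hne.closure_of_continuousOn hγ).mono_right hsupp
    rw [closure_Ioo hst.ne] at hmem
    exact hg.abs_mul_lipschitz_sub_le_setLIntegral hu hφ hφ1 γ hs hst ht hmem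

lemma IsUpperGradientOn.tsum {w : ℕ → α → EReal} {h : ℕ → α → ℝ≥0∞} {z : α → EReal}
    (hw : ∀ k, IsUpperGradientOn Ω (w k) (h k))
    (hz : ∀ x ∈ Ω, SumsTo (fun k => w k x) (z x)) :
    IsUpperGradientOn Ω z fun x => ∑' k, h k x := by
  refine ⟨Measurable.tsum fun k => (hw k).1, fun γ hγ => ?_⟩
  have h0 : γ.toFun 0 ∈ Ω := hγ 0 ⟨le_rfl, γ.len_pos.le⟩
  have hlen : γ.toFun γ.len ∈ Ω := hγ γ.len ⟨γ.len_pos.le, le_rfl⟩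
  calc (z (γ.toFun 0) - z (γ.toFun γ.len)).abs
      ≤ ∑' k, (w k (γ.toFun 0) - w k (γ.toFun γ.len)).abs := (hz _ h0).abs_sub_le (hz _ hlen)
    _ ≤ ∑' k, curveLint γ (h k) := ENNReal.tsum_le_tsum fun k => (hw k).2 γ hγ
    _ = curveLint γ fun x => ∑' k, h k x :=
        (lintegral_tsum fun k => γ.aemeasurable_comp (hw k).1).symm

end UpperGradient

namespace QBFL

section QuasiNorm

variable {α : Type*} [MeasurableSpace α] {μ : Measure α} (X : QBFL α μ) {Ω : Set α}

lemma cc_ne_zero : X.cc ≠ 0 :=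
  (one_pos.trans_le X.one_le_cc).ne'

lemma nrmOn_univ (u : α → EReal) : X.nrmOn univ u = X.nrm u := by
  rw [nrmOn, indicator_univ]

lemma nrmOn_mono {Ω' : Set α} (h : Ω ⊆ Ω') (u : α → EReal) : X.nrmOn Ω u ≤ X.nrmOn Ω' u := by
  refine X.nrm_mono _ _ (ae_of_all _ fun x => ?_)
  by_cases hx : x ∈ Ω
  · rw [indicator_of_mem hx, indicator_of_mem (h hx)]
  · simp [indicator_of_notMem hx]

lemma nrmOn_le_tsum {z : α → EReal} {w : ℕ → α → EReal}
    (hz : ∀ x ∈ Ω, (z x).abs ≤ ∑' k, (w k x).abs) :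
    X.nrmOn Ω z ≤ ∑' k, X.cc ^ (k + 1) * X.nrmOn Ω (w k) := by
  have hsum : ∀ x, (Ω.indicator z x).abs ≤
      (∑' k, ((Ω.indicator (w k) x).abs : EReal)).abs := fun x => by
    rw [ereal_tsum_coe_ennreal, ereal_abs_coe_ennreal]
    by_cases hx : x ∈ Ω
    · simpa only [indicator_of_mem hx] using hz x hx
    · simp [indicator_of_notMem hx]
  calc X.nrmOn Ω z ≤ X.nrm fun x => ∑' k, ((Ω.indicator (w k) x).abs : EReal) :=
        X.nrm_mono _ _ (ae_of_all _ hsum)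
    _ ≤ ∑' k, X.cc ^ (k + 1) * X.nrm fun x => ((Ω.indicator (w k) x).abs : EReal) :=
        X.nrm_rieszFischer _ fun k => ae_of_all _ fun x => EReal.coe_ennreal_nonneg _
    _ ≤ ∑' k, X.cc ^ (k + 1) * X.nrmOn Ω (w k) := by
        gcongr with k
        exact X.nrm_mono _ _ (ae_of_all _ fun x => (ereal_abs_coe_ennreal _).le)

lemma nrm_mul_le_nrmOn {φ : α → ℝ} (hφ1 : ∀ x, |φ x| ≤ 1) (hsupp : Function.support φ ⊆ Ω)
    (u : α → EReal) : X.nrm (fun x => (φ x : EReal) * u x) ≤ X.nrmOn Ω u := by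
  refine X.nrm_mono _ _ (ae_of_all _ fun x => ?_)
  by_cases hx : x ∈ Ω
  · rw [EReal.abs_mul, EReal.abs_def, indicator_of_mem hx]
    exact mul_le_of_le_one_left zero_le (ENNReal.ofReal_le_one.2 (hφ1 x))
  · simp [Function.notMem_support.1 fun hφx => hx (hsupp hφx)]

lemma nrmE_indicator_add_mul_abs_le (u : α → EReal) (g : α → ℝ≥0∞) (L : ℝ≥0) :
    X.nrmE (fun x => Ω.indicator g x + L * (Ω.indicator u x).abs) ≤
      X.cc * (X.nrmOn Ω (fun x => (g x : EReal)) + L * X.nrmOn Ω u) := by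
  have hsplit : (fun x => ((Ω.indicator g x + L * (Ω.indicator u x).abs : ℝ≥0∞) : EReal)) =
      fun x => Ω.indicator (fun x => (g x : EReal)) x +
        ((L : ℝ) : EReal) * ((Ω.indicator u x).abs : EReal) := by
    funext x
    rw [EReal.coe_ennreal_add, EReal.coe_ennreal_mul]
    congr 1
    by_cases hx : x ∈ Ω <;> simp [hx]
  rw [nrmE, hsplit]
  refine (X.nrm_triangle _ _).trans ?_
  rw [X.nrm_smul, abs_of_nonneg L.coe_nonneg, ENNReal.ofReal_coe_nnreal]
  unfold nrmOn
  gcongr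
  exact X.nrm_mono _ _ (ae_of_all _ fun x => (ereal_abs_coe_ennreal _).le)

end QuasiNorm

section Newtonian

variable {α : Type*} [MetricSpace α] [MeasurableSpace α] {μ : Measure α} (X : QBFL α μ)
  {Ω : Set α} {u : α → EReal} {φ : α → ℝ} {L : ℝ≥0}

lemma newtOn_eq_iInf (Ω : Set α) (u : α → EReal) :
    X.newtOn Ω u = ⨅ (g : α → ℝ≥0∞) (_ : IsUpperGradientOn Ω u g),
      (X.nrmOn Ω u + X.nrmOn Ω fun x => (g x : EReal)) := by
  simp only [newtOn, mem_ofPred_eq, ENNReal.add_iInf]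

lemma exists_isUpperGradientOn_of_newtOn_lt {a : ℝ≥0∞} (h : X.newtOn Ω u < a) :
    ∃ g, IsUpperGradientOn Ω u g ∧ X.nrmOn Ω u + X.nrmOn Ω (fun x => (g x : EReal)) < a := by
  simpa only [newtOn_eq_iInf, iInf_lt_iff, exists_prop] using h

lemma newtOn_univ (u : α → EReal) : X.newtOn univ u = X.newt u := by
  simp only [newtOn, newt, nrmOn_univ, nrmE, IsUpperGradientOn, IsUpperGradient, mem_univ,
    implies_true, true_imp_iff]

lemma newtOn_le_newt (Ω : Set α) (u : α → EReal) : X.newtOn Ω u ≤ X.newt u := by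
  rw [← newtOn_univ, newtOn_eq_iInf, newtOn_eq_iInf]
  refine le_iInf₂ fun g hg => (iInf₂_le g ⟨hg.1, fun γ _ => hg.2 γ fun _ _ => trivial⟩).trans ?_
  exact add_le_add (X.nrmOn_mono (subset_univ Ω) _) (X.nrmOn_mono (subset_univ Ω) _)

variable [BorelSpace α]

lemma newtOn_le_tsum {z : α → EReal} {w : ℕ → α → EReal}
    (hz : ∀ x ∈ Ω, SumsTo (fun k => w k x) (z x)) :
    X.newtOn Ω z ≤ ∑' k, X.cc ^ (k + 1) * X.newtOn Ω (w k) := by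
  refine ENNReal.le_of_forall_pos_le_add fun ε hε hfin => ?_
  obtain ⟨δ, hδ, hδε⟩ := ENNReal.exists_pos_tsum_mul_lt_of_countable
    (ENNReal.coe_ne_zero.2 hε.ne') (fun k => X.cc ^ (k + 1))
    fun k => ENNReal.pow_ne_top X.cc_lt_top.ne
  have hterm : ∀ k, X.newtOn Ω (w k) ≠ ⊤ := fun k htop =>
    ENNReal.ne_top_of_tsum_ne_top hfin.ne k (by
      rw [htop, ENNReal.mul_top (pow_ne_zero _ X.cc_ne_zero)])
  choose g hg hlt using fun k => X.exists_isUpperGradientOn_of_newtOn_lt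
    (ENNReal.lt_add_right (hterm k) (ENNReal.coe_ne_zero.2 (hδ k).ne'))
  have hnrm : X.nrmOn Ω z ≤ ∑' k, X.cc ^ (k + 1) * X.nrmOn Ω (w k) :=
    X.nrmOn_le_tsum fun x hx => (hz x hx).abs_le
  have hnrmE : X.nrmOn Ω (fun x => ((∑' k, g k x : ℝ≥0∞) : EReal)) ≤
      ∑' k, X.cc ^ (k + 1) * X.nrmOn Ω (fun x => (g k x : EReal)) :=
    X.nrmOn_le_tsum fun x _ => by simp only [ereal_abs_coe_ennreal, le_refl]
  calc X.newtOn Ω z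
      ≤ X.nrmOn Ω z + X.nrmOn Ω (fun x => ((∑' k, g k x : ℝ≥0∞) : EReal)) := by
        rw [newtOn_eq_iInf]
        exact iInf₂_le _ (IsUpperGradientOn.tsum hg hz)
    _ ≤ ∑' k, X.cc ^ (k + 1) *
          (X.nrmOn Ω (w k) + X.nrmOn Ω (fun x => (g k x : EReal))) := by
        simp only [mul_add, ENNReal.tsum_add]
        exact add_le_add hnrm hnrmE
    _ ≤ ∑' k, X.cc ^ (k + 1) * (X.newtOn Ω (w k) + δ k) := by
        exact ENNReal.tsum_le_tsum fun k => mul_le_mul_right (hlt k).le _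
    _ ≤ (∑' k, X.cc ^ (k + 1) * X.newtOn Ω (w k)) + ε := by
        simp only [mul_add, ENNReal.tsum_add]
        gcongr

lemma newt_mul_le (hΩ : MeasurableSet Ω) (hu : Measurable (Ω.indicator u)) (hφ : LipschitzWith L φ)
    (hφ1 : ∀ x, |φ x| ≤ 1) (hsupp : tsupport φ ⊆ Ω) :
    X.newt (fun x => (φ x : EReal) * u x) ≤ X.cc * (1 + L) * X.newtOn Ω u := by
  have hne_zero : X.cc * (1 + L) ≠ 0 :=
    mul_ne_zero X.cc_ne_zero (by simp)
  have hne_top : X.cc * (1 + L) ≠ ⊤ := ENNReal.mul_ne_top X.cc_lt_top.ne (by simp)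
  simp only [newtOn_eq_iInf, ENNReal.mul_iInf_of_ne hne_zero hne_top]
  refine le_iInf₂ fun g hg => ?_
  have hleibniz := hg.mul_lipschitz hΩ hu hφ hφ1 hsupp
  set A := X.nrmOn Ω u
  set B := X.nrmOn Ω fun x => (g x : EReal)
  calc X.newt (fun x => (φ x : EReal) * u x)
      ≤ A + X.cc * (B + L * A) :=
        add_le_add (X.nrm_mul_le_nrmOn hφ1 ((subset_tsupport φ).trans hsupp) u)
          ((iInf₂_le _ hleibniz).trans (X.nrmE_indicator_add_mul_abs_le u g L))
    _ ≤ X.cc * A + X.cc * (B + L * A) := by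
        gcongr
        exact le_mul_of_one_le_left zero_le X.one_le_cc
    _ ≤ X.cc * A + X.cc * (B + L * A) + X.cc * L * B := le_self_add
    _ = X.cc * (1 + L) * (A + B) := by ring

lemma memN1_mul (hΩ : MeasurableSet Ω) (hu : Measurable (Ω.indicator u)) (hfin : X.newtOn Ω u < ⊤)
    (hφ : LipschitzWith L φ) (hφ1 : ∀ x, |φ x| ≤ 1) (hsupp : tsupport φ ⊆ Ω) :
    X.memN1 fun x => (φ x : EReal) * u x := by
  have hind : (fun x => (φ x : EReal) * u x) = fun x => (φ x : EReal) * Ω.indicator u x := by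
    funext x
    by_cases hx : x ∈ Ω
    · rw [indicator_of_mem hx]
    · simp [image_eq_zero_of_notMem_tsupport fun hφx => hx (hsupp hφx)]
  refine ⟨?_, (X.newt_mul_le hΩ hu hφ hφ1 hsupp).trans_lt ?_⟩
  · rw [hind]
    exact hφ.continuous.measurable.coe_real_ereal.mul hu
  · exact ENNReal.mul_lt_top (ENNReal.mul_lt_top X.cc_lt_top (by simp)) hfin

lemma exists_locallyLipschitz_newtOn_mul_sub_lt
    (hdens : ∀ u : α → EReal, X.memN1 u → ∀ ε : ℝ≥0∞, 0 < ε →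
      ∃ f : α → ℝ, LocallyLipschitz f ∧ X.newt (fun x => u x - (f x : EReal)) < ε)
    (hu : X.memN1 u) (hφ : LipschitzWith L φ) (hφ1 : ∀ x, |φ x| ≤ 1) (Ω : Set α) {δ : ℝ≥0∞}
    (hδ : 0 < δ) :
    ∃ f : α → ℝ, LocallyLipschitz f ∧
      X.newtOn Ω (fun x => (φ x : EReal) * (u x - (f x : EReal))) < δ := by
  have hne_top : X.cc * (1 + L) ≠ ⊤ := ENNReal.mul_ne_top X.cc_lt_top.ne (by simp)
  obtain ⟨f, hf, hlt⟩ := hdens u hu (δ / (X.cc * (1 + L))) (ENNReal.div_pos hδ.ne' hne_top)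
  have hmeas : Measurable fun x => u x - (f x : EReal) :=
    hu.1.sub hf.continuous.measurable.coe_real_ereal
  refine ⟨f, hf, ?_⟩
  calc X.newtOn Ω (fun x => (φ x : EReal) * (u x - (f x : EReal)))
      ≤ X.newt fun x => (φ x : EReal) * (u x - (f x : EReal)) := X.newtOn_le_newt Ω _
    _ ≤ X.cc * (1 + L) * X.newt fun x => u x - (f x : EReal) := by
        rw [← newtOn_univ _ fun x => u x - (f x : EReal)]
        exact X.newt_mul_le MeasurableSet.univ (by rwa [indicator_univ]) hφ hφ1 (subset_univ _)
    _ < δ := by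
        rw [mul_comm]
        exact ENNReal.mul_lt_of_lt_div hlt

end Newtonian

end QBFL

theorem locLip_dense_on_open_general {P : Type*} [MetricSpace P] [MeasurableSpace P] [BorelSpace P]
    {μ : Measure P} (X : QBFL P μ)
    (hdens : ∀ u : P → EReal, X.memN1 u → ∀ ε : ℝ≥0∞, 0 < ε →
      ∃ f : P → ℝ, LocallyLipschitz f ∧ X.newt (fun x => u x - (f x : EReal)) < ε)
    {Ω : Set P} (hΩ : IsOpen Ω) {u : P → EReal} (hu : Measurable (Ω.indicator u))
    (hfin : X.newtOn Ω u < ⊤) {ε : ℝ≥0∞} (hε : 0 < ε) :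
    ∃ v : P → ℝ, LocallyLipschitzOn Ω v ∧ X.newtOn Ω (fun x => u x - (v x : EReal)) ≤ ε := by
  obtain ⟨ρ, hρ, hρ1, hρΩ⟩ := exists_lipschitz_pos_iff_mem hΩ
  have hpos : ∀ {x}, x ∈ Ω → 0 < ρ x := (hρΩ _).2
  have hcutoff : ∀ k, X.memN1 fun x => (dyadicCutoff ρ (k + 2) x : EReal) * u x := fun k =>
    X.memN1_mul hΩ.measurableSet hu hfin (lipschitzWith_dyadicCutoff hρ _)
      (abs_dyadicCutoff_le_one _)
      ((tsupport_dyadicCutoff_subset hρ.continuous _).trans fun x => (hρΩ x).1)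
  obtain ⟨δ, hδ, hδε⟩ := ENNReal.exists_pos_tsum_mul_lt_of_countable hε.ne'
    (fun k => X.cc ^ (k + 1)) fun k => ENNReal.pow_ne_top X.cc_lt_top.ne
  choose f hf hlt using fun k => X.exists_locallyLipschitz_newtOn_mul_sub_lt hdens (hcutoff k)
    (lipschitzWith_dyadicBump hρ k) (abs_dyadicBump_le_one k) Ω (ENNReal.coe_pos.2 (hδ k))
  have hzero : ∀ x ∈ Ω, ∃ N, ∀ᶠ y in 𝓝 x, ∀ k ≥ N, dyadicBump ρ k y * f k y = 0 := fun x hx =>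
    (exists_eventually_dyadicBump_eq_zero hρ.continuous (hpos hx)).imp fun N hN =>
      hN.mono fun y hy k hk => mul_eq_zero_of_left (hy k hk) _
  have hsummable : ∀ x ∈ Ω, Summable fun k => dyadicBump ρ k x * f k x := fun x hx =>
    let ⟨N, hN⟩ := hzero x hx
    summable_of_ne_finset_zero (s := Finset.range N) fun k hk =>
      hN.self_of_nhds k (not_lt.1 (Finset.mem_range.not.1 hk))
  refine ⟨fun x => ∑' k, dyadicBump ρ k x * f k x, locallyLipschitzOn_tsum (fun k =>
    locallyLipschitz_mul (lipschitzWith_dyadicBump hρ k).locallyLipschitz (hf k)) hzero, ?_⟩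
  calc X.newtOn Ω (fun x => u x - ((∑' k, dyadicBump ρ k x * f k x : ℝ) : EReal))
      ≤ ∑' k, X.cc ^ (k + 1) * X.newtOn Ω fun x =>
          (dyadicBump ρ k x : EReal) *
            ((dyadicCutoff ρ (k + 2) x : EReal) * u x - (f k x : EReal)) :=
        X.newtOn_le_tsum fun x hx => sumsTo_mul_sub (u x)
          (hasSum_dyadicBump hρ.continuous hρ1 (hpos hx)) (dyadicBump_mul_dyadicCutoff · x)
          (hsummable x hx).hasSum
    _ ≤ ∑' k, X.cc ^ (k + 1) * δ k :=
        ENNReal.tsum_le_tsum fun k => mul_le_mul_right (hlt k).le _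
    _ ≤ ε := hδε.le

/-- Let `P` be proper, `Ω ⊆ P` open, `‖·‖_X` absolutely continuous and
containing characteristic functions of sets of finite measure. If locally Lipschitz functions
are dense in `N¹X(P)`, then locally Lipschitz functions (on `Ω`) are dense in `N¹X(Ω)`. -/
theorem locLip_dense_on_open
    {P : Type*} [MetricSpace P] [MeasurableSpace P] [BorelSpace P] [ProperSpace P]
    (μ : MeasureTheory.Measure P) [SigmaFinite μ]
    (hball : ∀ (x : P) (r : ℝ), 0 < r → 0 < μ (Metric.ball x r) ∧ μ (Metric.ball x r) < ⊤)
    (X : QBFL P μ) (hAC : X.HasACNorm)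
    (hsimple : ∀ E : Set P, MeasurableSet E → μ E < ⊤ → X.nrm (E.indicator 1) < ⊤)
    (hdens : ∀ u : P → EReal, X.memN1 u → ∀ ε : ℝ≥0∞, 0 < ε →
      ∃ f : P → ℝ, LocallyLipschitz f ∧ X.newt (fun x => u x - (f x : EReal)) < ε)
    (Ω : Set P) (hΩ : IsOpen Ω) :
    ∀ u : P → EReal, Measurable (Ω.indicator u) → X.newtOn Ω u < ⊤ →
      ∀ ε : ℝ≥0∞, 0 < ε →
        ∃ v : P → ℝ,
          (∀ x ∈ Ω, ∃ (K : ℝ≥0) (t : Set P), t ∈ nhdsWithin x Ω ∧ LipschitzOnWith K v t) ∧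
          X.newtOn Ω (fun x => u x - (v x : EReal)) ≤ ε :=
  fun _ hu hfin _ hε => locLip_dense_on_open_general X hdens hΩ hu hfin hε

end
end

section
/- Let 1 < p < ∞, α ≥ 0 and 0 < a < ∞. Then there exists a constant C > 0 such that ∫_0^a f(t) t^{1/p − 1} dt ≤ C (∫_0^a f(t)^p (1 + log(a/t))^{α p} dt)^{1/p} holds for every nonnegative decreasing measurable function f on (0, a) if and only if α > 1 − 1/p. (Equivalently, the Zygmund space L^p(log L)^α(E) embeds continuously into the Lorentz space L^{p,1}(E) for a measurable set E of finite positive measure if and only if α > 1 − 1/p.) -/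
open MeasureTheory Set ENNReal

/-!
Write `q` for the conjugate exponent of `p` and `w t = 1 + log (a / t)`.

If `α > 1 - 1/p = 1/q`, apply Hölder's inequality to the factorization
`f t * t ^ (1/p - 1) = (f t * w t ^ α) * (t ^ (1/p - 1) * w t ^ (-α))`. The second factor yields
`(∫ t⁻¹ * w t ^ (-α q) dt) ^ (1/q)`, which the substitution `s = w t` turns into
`(∫_1^∞ s ^ (-α q) ds) ^ (1/q)`, finite because `α q > 1`.

If `α ≤ 1/q`, a single decreasing function refutes the inequality for every constant, namely
`t ^ (-1/p) / (L log L)` with `L = 3 p + log (a / t)`. The substitutions `s = L` and `v = log s`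
turn the left side into `∫ v⁻¹ dv = ∞`, while `w ^ (α p) ≤ L ^ (p - 1)` bounds the `p`-th power of
the right side by `∫ v ^ (-p) dv < ∞`.
-/

section LogarithmicSubstitution

variable {a c : ℝ}

lemma setLIntegral_exp_image_inv_mul_comp_log {S : Set ℝ} (hS : MeasurableSet S) (g : ℝ → ℝ≥0∞) :
    ∫⁻ t in Real.exp '' S, ENNReal.ofReal t⁻¹ * g (Real.log t) = ∫⁻ y in S, g y := by
  rw [lintegral_image_eq_lintegral_abs_deriv_mul hS
    (fun y _ => (Real.hasDerivAt_exp y).hasDerivWithinAt) Real.exp_injective.injOn]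
  refine setLIntegral_congr_fun hS fun y _ => ?_
  simp only [Real.abs_exp, Real.log_exp]
  rw [← mul_assoc, ← ENNReal.ofReal_mul (Real.exp_pos y).le,
    mul_inv_cancel₀ (Real.exp_ne_zero y), ENNReal.ofReal_one, one_mul]

lemma lintegral_Ioi_inv_mul_comp_log (hc : 0 < c) (g : ℝ → ℝ≥0∞) :
    ∫⁻ s in Ioi c, ENNReal.ofReal s⁻¹ * g (Real.log s) = ∫⁻ v in Ioi (Real.log c), g v := by
  rw [← setLIntegral_exp_image_inv_mul_comp_log measurableSet_Ioi g, Real.image_exp_Ioi,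
    Real.exp_log hc]

lemma lintegral_Ioo_inv_mul_comp_add_log_div (ha : 0 < a) (c : ℝ) (g : ℝ → ℝ≥0∞) :
    ∫⁻ t in Ioo 0 a, ENNReal.ofReal t⁻¹ * g (c + Real.log (a / t)) = ∫⁻ s in Ioi c, g s := by
  have image_exp : Real.exp '' Iio (Real.log a) = Ioo 0 a := by
    rw [Real.image_exp_Iio, Real.exp_log ha]
  have preimage_Ioi : (fun y => c + Real.log a - y) ⁻¹' Ioi c = Iio (Real.log a) := by
    simp only [preimage_const_sub_Ioi, add_sub_cancel_left]
  calc ∫⁻ t in Ioo 0 a, ENNReal.ofReal t⁻¹ * g (c + Real.log (a / t))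
      = ∫⁻ t in Ioo 0 a, ENNReal.ofReal t⁻¹ * g (c + Real.log a - Real.log t) :=
        setLIntegral_congr_fun measurableSet_Ioo fun t ht => by
          simp only [Real.log_div ha.ne' ht.1.ne', add_sub_assoc]
    _ = ∫⁻ y in Iio (Real.log a), g (c + Real.log a - y) := by
        rw [← image_exp, setLIntegral_exp_image_inv_mul_comp_log measurableSet_Iio
          (fun y => g (c + Real.log a - y))]
    _ = ∫⁻ s in Ioi c, g s := by
        rw [← preimage_Ioi]
        exact (Measure.measurePreserving_sub_left volume _).setLIntegral_comp_preimage_emb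
          (MeasurableEquiv.subLeft _).measurableEmbedding g _

lemma lintegral_Ioo_inv_mul_inv_mul_comp_log_add_log_div (ha : 0 < a) (hc : 0 < c)
    (g : ℝ → ℝ≥0∞) :
    ∫⁻ t in Ioo 0 a, ENNReal.ofReal t⁻¹ *
        (ENNReal.ofReal (c + Real.log (a / t))⁻¹ * g (Real.log (c + Real.log (a / t)))) =
      ∫⁻ v in Ioi (Real.log c), g v := by
  rw [lintegral_Ioo_inv_mul_comp_add_log_div ha c
    fun s => ENNReal.ofReal s⁻¹ * g (Real.log s), lintegral_Ioi_inv_mul_comp_log hc]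

lemma lintegral_Ioi_inv_eq_top (hc : 0 ≤ c) :
    ∫⁻ v in Ioi c, ENNReal.ofReal v⁻¹ = ⊤ := by
  have inv_nonneg : 0 ≤ᵐ[volume.restrict (Ioi c)] fun v : ℝ => v⁻¹ := by
    filter_upwards [ae_restrict_mem measurableSet_Ioi] with v hv
    exact inv_nonneg.2 (hc.trans hv.le)
  by_contra h
  exact not_integrableOn_Ioi_inv
    ((lintegral_ofReal_ne_top_iff_integrable (by fun_prop) inv_nonneg).1 h)

lemma lintegral_Ioi_rpow {r : ℝ} (hc : 0 < c) (hr : r < -1) :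
    ∫⁻ v in Ioi c, ENNReal.ofReal (v ^ r) = ENNReal.ofReal (-c ^ (r + 1) / (r + 1)) := by
  rw [← integral_Ioi_rpow_of_lt hr hc, ofReal_integral_eq_lintegral_ofReal
    (integrableOn_Ioi_rpow_of_lt hr hc)]
  filter_upwards [ae_restrict_mem measurableSet_Ioi] with v hv
  exact Real.rpow_nonneg (hc.trans hv).le r

end LogarithmicSubstitution

/-- The integral `∫_0^a f(t) t^{1/p-1} dt`, which is `p` times the norm of the Lorentz space
`L^{p,1}` when `f` is a decreasing rearrangement. -/
noncomputable def lorentzIntegral (p a : ℝ) (f : ℝ → ℝ≥0∞) : ℝ≥0∞ :=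
  ∫⁻ t in Ioo (0 : ℝ) a, f t * ENNReal.ofReal (t ^ (1 / p - 1))

/-- The expression `(∫_0^a f(t)^p (1 + log(a/t))^{αp} dt)^{1/p}`, which is the norm of the Zygmund
space `L^p(log L)^α` when `f` is a decreasing rearrangement. -/
noncomputable def zygmundNorm (p α a : ℝ) (f : ℝ → ℝ≥0∞) : ℝ≥0∞ :=
  (∫⁻ t in Ioo (0 : ℝ) a,
    f t ^ p * ENNReal.ofReal ((1 + Real.log (a / t)) ^ (α * p))) ^ (1 / p)

lemma log_div_pos_of_mem_Ioo {a t : ℝ} (ht : t ∈ Ioo 0 a) : 0 < Real.log (a / t) :=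
  Real.log_pos ((one_lt_div ht.1).2 ht.2)

section Embedding

variable {p q a : ℝ}

lemma lintegral_dual_weight_rpow (hpq : p.HolderConjugate q) (ha : 0 < a) (α : ℝ) :
    ∫⁻ t in Ioo 0 a,
        ENNReal.ofReal (t ^ (1 / p - 1) * (1 + Real.log (a / t)) ^ (-α)) ^ q =
      ∫⁻ s in Ioi 1, ENNReal.ofReal (s ^ (-(α * q))) := by
  rw [← lintegral_Ioo_inv_mul_comp_add_log_div ha 1 fun s => ENNReal.ofReal (s ^ (-(α * q)))]
  refine setLIntegral_congr_fun measurableSet_Ioo fun t ht => ?_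
  have ht0 : 0 < t := ht.1
  have hlog := log_div_pos_of_mem_Ioo ht
  have hexp : (1 / p - 1) * q = -1 := by
    rw [one_div, hpq.inv_sub_one, neg_mul, inv_mul_cancel₀ hpq.symm.ne_zero]
  rw [ENNReal.ofReal_rpow_of_nonneg (by positivity) hpq.symm.nonneg,
    Real.mul_rpow (by positivity) (by positivity), ← Real.rpow_mul ht0.le,
    ← Real.rpow_mul (by positivity), hexp, Real.rpow_neg_one, neg_mul,
    ENNReal.ofReal_mul (by positivity)]

lemma lorentzIntegral_le_lintegral_mul_zygmundNorm (hpq : p.HolderConjugate q)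
    (ha : 0 < a) (α : ℝ) {f : ℝ → ℝ≥0∞} (hf : AEMeasurable f (volume.restrict (Ioo 0 a))) :
    lorentzIntegral p a f ≤
      (∫⁻ s in Ioi 1, ENNReal.ofReal (s ^ (-(α * q)))) ^ (1 / q) * zygmundNorm p α a f := by
  let F t := f t * ENNReal.ofReal ((1 + Real.log (a / t)) ^ α)
  let G t := ENNReal.ofReal (t ^ (1 / p - 1) * (1 + Real.log (a / t)) ^ (-α))
  have lorentz_eq : lorentzIntegral p a f = ∫⁻ t in Ioo 0 a, (F * G) t := by
    refine setLIntegral_congr_fun measurableSet_Ioo fun t ht => ?_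
    have hlog := log_div_pos_of_mem_Ioo ht
    simp only [F, G, Pi.mul_apply]
    rw [mul_assoc, ← ENNReal.ofReal_mul (by positivity), mul_left_comm,
      ← Real.rpow_add (by positivity), add_neg_cancel, Real.rpow_zero, mul_one]
  have zygmund_eq : zygmundNorm p α a f = (∫⁻ t in Ioo 0 a, F t ^ p) ^ (1 / p) := by
    refine congrArg (· ^ (1 / p)) (setLIntegral_congr_fun measurableSet_Ioo fun t ht => ?_)
    have hlog := log_div_pos_of_mem_Ioo ht
    simp only [F]
    rw [ENNReal.mul_rpow_of_nonneg _ _ hpq.nonneg,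
      ENNReal.ofReal_rpow_of_nonneg (by positivity) hpq.nonneg, ← Real.rpow_mul (by positivity)]
  rw [lorentz_eq, zygmund_eq, ← lintegral_dual_weight_rpow hpq ha, mul_comm (_ ^ (1 / q))]
  have hF : AEMeasurable F (volume.restrict (Ioo 0 a)) := by fun_prop
  have hG : AEMeasurable G (volume.restrict (Ioo 0 a)) := by fun_prop
  exact ENNReal.lintegral_mul_le_Lp_mul_Lq _ hpq hF hG

lemma lorentzIntegral_le_mul_zygmundNorm {α : ℝ} (hpq : p.HolderConjugate q)
    (ha : 0 < a) (hαq : 1 < α * q) {f : ℝ → ℝ≥0∞}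
    (hf : AEMeasurable f (volume.restrict (Ioo 0 a))) :
    lorentzIntegral p a f ≤
      ENNReal.ofReal ((α * q - 1)⁻¹ ^ (1 / q)) * zygmundNorm p α a f := by
  have hconst : -1 ^ (-(α * q) + 1) / (-(α * q) + 1) = (α * q - 1)⁻¹ := by
    rw [Real.one_rpow, neg_add_eq_sub, ← neg_sub, neg_div_neg_eq, one_div]
  have h := lorentzIntegral_le_lintegral_mul_zygmundNorm hpq ha α hf
  rwa [lintegral_Ioi_rpow one_pos (by linarith), hconst,
    ENNReal.ofReal_rpow_of_pos (inv_pos.2 (sub_pos.2 hαq))] at h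

end Embedding

section Counterexample

variable {p α a t : ℝ}

lemma antitoneOn_mul_exp_neg_div {c : ℝ} (hc : 0 < c) :
    AntitoneOn (fun x : ℝ => x * Real.exp (-(x / c))) (Ici c) := by
  intro x hx y hy hxy
  -- `x * exp (-x / c)` is `c * (log z / z)` at `z = exp (x / c)`.
  have log_div_self_le := Real.log_div_self_antitoneOn
    (Real.exp_le_exp.2 ((one_le_div hc).2 hx)) (Real.exp_le_exp.2 ((one_le_div hc).2 hy))
    (Real.exp_le_exp.2 (div_le_div_of_nonneg_right hxy hc.le))
  simp only [Real.log_exp, div_eq_mul_inv _ (Real.exp _), ← Real.exp_neg] at log_div_self_le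
  rwa [div_mul_eq_mul_div, div_mul_eq_mul_div, div_le_div_iff_of_pos_right hc] at log_div_self_le

lemma antitoneOn_mul_log_mul_exp_neg_div (hp : 0 < p) :
    AntitoneOn (fun x : ℝ => x * Real.log x * Real.exp (-(x / p)))
      (Ici (max (2 * p) (Real.exp 1))) := by
  have factorization : ∀ x : ℝ, x ≠ 0 → x * Real.log x * Real.exp (-(x / p)) =
      (x * Real.exp (-(x / (2 * p)))) ^ 2 * (Real.log x / x) := fun x hx => by
    have exp_sq : Real.exp (-(x / (2 * p))) ^ 2 = Real.exp (-(x / p)) := by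
      rw [← Real.exp_nat_mul]
      congr 1
      push_cast
      field_simp
    rw [mul_pow, exp_sq]
    field_simp
  intro x hx y _ hxy
  obtain ⟨hx2p, hxe⟩ := max_le_iff.1 (mem_Ici.1 hx)
  have hx0 : 0 < x := by linarith
  have hy0 : 0 < y := hx0.trans_le hxy
  have hlogy : 0 ≤ Real.log y :=
    Real.log_nonneg ((Real.one_le_exp zero_le_one).trans (hxe.trans hxy))
  simp only [factorization x hx0.ne', factorization y hy0.ne']
  gcongr ?_ ^ 2 * ?_
  · exact antitoneOn_mul_exp_neg_div (by positivity) hx2p (hx2p.trans hxy) hxy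
  · exact Real.log_div_self_antitoneOn hxe (hxe.trans hxy) hxy

/-- The decreasing function `t ^ (-1/p) / (L log L)` with `L = 3 p + log (a / t)`, whose
`L^{p,1}` norm is infinite although its `L^p(log L)^α` norm is finite for `α ≤ 1 - 1/p`. The shift
`3 p` makes it decreasing on all of `(0, a)`. -/
noncomputable def lorentzCounterexample (p a t : ℝ) : ℝ :=
  t ^ (-(1 / p)) * ((3 * p + Real.log (a / t)) * Real.log (3 * p + Real.log (a / t)))⁻¹

lemma measurable_lorentzCounterexample (p a : ℝ) : Measurable (lorentzCounterexample p a) := by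
  unfold lorentzCounterexample
  fun_prop

lemma lorentzCounterexample_eq_mul_inv (hp : p ≠ 0) (ha : 0 < a) (ht : 0 < t) :
    lorentzCounterexample p a t = a ^ (-(1 / p)) * Real.exp (-3) *
      ((3 * p + Real.log (a / t)) * Real.log (3 * p + Real.log (a / t)) *
        Real.exp (-((3 * p + Real.log (a / t)) / p)))⁻¹ := by
  have rpow_eq : t ^ (-(1 / p)) =
      a ^ (-(1 / p)) * Real.exp (-3) * Real.exp ((3 * p + Real.log (a / t)) / p) := by
    rw [Real.rpow_def_of_pos ht, Real.rpow_def_of_pos ha, ← Real.exp_add, ← Real.exp_add,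
      Real.log_div ha.ne' ht.ne']
    congr 1
    field_simp
    ring
  rw [lorentzCounterexample, rpow_eq, mul_inv _ (Real.exp _), Real.exp_neg (_ / p), inv_inv]
  ring

lemma antitoneOn_lorentzCounterexample (hp : 1 ≤ p) (ha : 0 < a) :
    AntitoneOn (lorentzCounterexample p a) (Ioo 0 a) := by
  intro t ht u hu htu
  have hp0 : 0 < p := one_pos.trans_le hp
  have hlog_u := log_div_pos_of_mem_Ioo hu
  have hlog_le : Real.log (a / u) ≤ Real.log (a / t) :=
    Real.log_le_log (div_pos ha hu.1) (div_le_div_of_nonneg_left ha.le ht.1 htu)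
  have hmem : 3 * p + Real.log (a / u) ∈ Ici (max (2 * p) (Real.exp 1)) :=
    max_le (show 2 * p ≤ _ by linarith) (show Real.exp 1 ≤ _ by linarith [Real.exp_one_lt_three])
  have hlog_pos : 0 < Real.log (3 * p + Real.log (a / t)) := Real.log_pos (by linarith)
  have hL_le := add_le_add_right hlog_le (3 * p)
  rw [lorentzCounterexample_eq_mul_inv hp0.ne' ha ht.1,
    lorentzCounterexample_eq_mul_inv hp0.ne' ha hu.1]
  refine mul_le_mul_of_nonneg_left (inv_anti₀ ?_ ?_) (by positivity)
  · exact mul_pos (mul_pos (by linarith) hlog_pos) (Real.exp_pos _)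
  · exact antitoneOn_mul_log_mul_exp_neg_div hp0 hmem (hmem.trans hL_le) hL_le

lemma lorentzCounterexample_nonneg (hp : 1 ≤ p) (ht : t ∈ Ioo 0 a) :
    0 ≤ lorentzCounterexample p a t := by
  have hL : 1 ≤ 3 * p + Real.log (a / t) := by linarith [log_div_pos_of_mem_Ioo ht]
  exact mul_nonneg (Real.rpow_nonneg ht.1.le _)
    (inv_nonneg.2 (mul_nonneg (zero_le_one.trans hL) (Real.log_nonneg hL)))

lemma lorentzIntegral_lorentzCounterexample (hp : 1 ≤ p) (ha : 0 < a) :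
    lorentzIntegral p a (fun t => ENNReal.ofReal (lorentzCounterexample p a t)) = ⊤ := by
  rw [← lintegral_Ioi_inv_eq_top (Real.log_nonneg (show 1 ≤ 3 * p by linarith)),
    ← lintegral_Ioo_inv_mul_inv_mul_comp_log_add_log_div ha (show 0 < 3 * p by linarith)]
  refine setLIntegral_congr_fun measurableSet_Ioo fun t ht => ?_
  have ht0 : 0 < t := ht.1
  have hlog := log_div_pos_of_mem_Ioo ht
  simp only [lorentzCounterexample]
  rw [← ENNReal.ofReal_mul' (by positivity), mul_right_comm,
    ← Real.rpow_add ht0, show -(1 / p) + (1 / p - 1) = -1 by ring, Real.rpow_neg_one, mul_inv,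
    ENNReal.ofReal_mul (by positivity), ENNReal.ofReal_mul (by positivity)]

lemma lorentzCounterexample_rpow (hp : 1 ≤ p) (ht : t ∈ Ioo 0 a) :
    lorentzCounterexample p a t ^ p =
      t⁻¹ * ((3 * p + Real.log (a / t)) ^ (-p) *
        Real.log (3 * p + Real.log (a / t)) ^ (-p)) := by
  have ht0 : 0 < t := ht.1
  have hlog := log_div_pos_of_mem_Ioo ht
  have hL : 1 ≤ 3 * p + Real.log (a / t) := by linarith
  have hlogL := Real.log_nonneg hL
  rw [lorentzCounterexample, Real.mul_rpow (by positivity) (by positivity), ← Real.rpow_mul ht0.le,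
    Real.inv_rpow (by positivity), ← Real.rpow_neg (by positivity),
    Real.mul_rpow (by positivity) hlogL, show -(1 / p) * p = -1 by field_simp, Real.rpow_neg_one]

lemma lorentzCounterexample_rpow_mul_le (hp : 1 ≤ p) (hα : α ≤ 1 - 1 / p)
    (ht : t ∈ Ioo 0 a) :
    lorentzCounterexample p a t ^ p * (1 + Real.log (a / t)) ^ (α * p) ≤
      t⁻¹ * ((3 * p + Real.log (a / t))⁻¹ * Real.log (3 * p + Real.log (a / t)) ^ (-p)) := by
  rw [lorentzCounterexample_rpow hp ht]
  have ht0 : 0 < t := ht.1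
  have hlog := log_div_pos_of_mem_Ioo ht
  set w := 1 + Real.log (a / t)
  set L := 3 * p + Real.log (a / t)
  have hL : 1 ≤ L := by linarith
  have hlogL := Real.log_nonneg hL
  have hαp : α * p ≤ p - 1 := by
    calc α * p ≤ (1 - 1 / p) * p := mul_le_mul_of_nonneg_right hα (by linarith)
      _ = p - 1 := by field_simp
  have weight_le : w ^ (α * p) ≤ L ^ (p - 1) :=
    calc w ^ (α * p) ≤ w ^ (p - 1) := Real.rpow_le_rpow_of_exponent_le (by linarith) hαp
      _ ≤ L ^ (p - 1) := Real.rpow_le_rpow (by linarith) (by linarith) (by linarith)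
  calc t⁻¹ * (L ^ (-p) * Real.log L ^ (-p)) * w ^ (α * p)
      ≤ t⁻¹ * (L ^ (-p) * Real.log L ^ (-p)) * L ^ (p - 1) := by gcongr
    _ = t⁻¹ * (L ^ (-p + (p - 1)) * Real.log L ^ (-p)) := by
        rw [Real.rpow_add (by positivity)]; ring
    _ = t⁻¹ * (L⁻¹ * Real.log L ^ (-p)) := by
        rw [show -p + (p - 1) = -1 by ring, Real.rpow_neg_one]

lemma zygmundNorm_lorentzCounterexample_ne_top (hp : 1 < p) (ha : 0 < a)
    (hα : α ≤ 1 - 1 / p) :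
    zygmundNorm p α a (fun t => ENNReal.ofReal (lorentzCounterexample p a t)) ≠ ⊤ := by
  have hlog : 0 < Real.log (3 * p) := Real.log_pos (by linarith)
  refine ENNReal.rpow_ne_top_of_nonneg (by positivity) (ne_of_lt ?_)
  calc ∫⁻ t in Ioo 0 a, ENNReal.ofReal (lorentzCounterexample p a t) ^ p *
        ENNReal.ofReal ((1 + Real.log (a / t)) ^ (α * p))
      ≤ ∫⁻ t in Ioo 0 a, ENNReal.ofReal t⁻¹ * (ENNReal.ofReal (3 * p + Real.log (a / t))⁻¹ *
          ENNReal.ofReal (Real.log (3 * p + Real.log (a / t)) ^ (-p))) := by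
        refine setLIntegral_mono' measurableSet_Ioo fun t ht => ?_
        have ht0 : 0 < t := ht.1
        have hlog_t := log_div_pos_of_mem_Ioo ht
        have hf := lorentzCounterexample_nonneg hp.le ht
        rw [ENNReal.ofReal_rpow_of_nonneg hf (by positivity), ← ENNReal.ofReal_mul (by positivity),
          ← ENNReal.ofReal_mul (by positivity), ← ENNReal.ofReal_mul (by positivity)]
        exact ENNReal.ofReal_le_ofReal (lorentzCounterexample_rpow_mul_le hp.le hα ht)
    _ = ∫⁻ v in Ioi (Real.log (3 * p)), ENNReal.ofReal (v ^ (-p)) :=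
        lintegral_Ioo_inv_mul_inv_mul_comp_log_add_log_div ha (by positivity)
          fun v => ENNReal.ofReal (v ^ (-p))
    _ = ENNReal.ofReal (-Real.log (3 * p) ^ (-p + 1) / (-p + 1)) :=
        lintegral_Ioi_rpow hlog (by linarith)
    _ < ⊤ := ENNReal.ofReal_lt_top

end Counterexample

theorem zygmund_embeds_into_lorentz_iff_general (p α a : ℝ) (hp : 1 < p) (ha : 0 < a) :
    List.TFAE [
      ∃ C : ℝ, 0 < C ∧ ∀ f : ℝ → ℝ≥0∞, Measurable f →
        lorentzIntegral p a f ≤ ENNReal.ofReal C * zygmundNorm p α a f,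
      ∃ C : ℝ, 0 < C ∧ ∀ f : ℝ → ℝ≥0∞, Measurable f → AntitoneOn f (Ioo 0 a) →
        lorentzIntegral p a f ≤ ENNReal.ofReal C * zygmundNorm p α a f,
      1 - 1 / p < α] := by
  tfae_have 1 → 2 := fun ⟨C, hC, h⟩ => ⟨C, hC, fun f hf _ => h f hf⟩
  tfae_have 2 → 3 := by
    rintro ⟨C, -, h⟩
    by_contra! hα
    have top_le := h (fun t => ENNReal.ofReal (lorentzCounterexample p a t))
      (measurable_lorentzCounterexample p a).ennreal_ofReal
      (ENNReal.ofReal_mono.comp_antitoneOn (antitoneOn_lorentzCounterexample hp.le ha))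
    rw [lorentzIntegral_lorentzCounterexample hp.le ha, top_le_iff] at top_le
    exact ENNReal.mul_ne_top ENNReal.ofReal_ne_top
      (zygmundNorm_lorentzCounterexample_ne_top hp ha hα) top_le
  tfae_have 3 → 1 := by
    intro hα
    have hpq := Real.HolderConjugate.conjExponent hp
    have hαq : 1 < α * p.conjExponent := by
      rwa [one_div, hpq.one_sub_inv, inv_lt_iff_one_lt_mul₀ hpq.symm.pos] at hα
    exact ⟨_, Real.rpow_pos_of_pos (inv_pos.2 (sub_pos.2 hαq)) _,
      fun f hf => lorentzIntegral_le_mul_zygmundNorm hpq ha hαq hf.aemeasurable⟩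
  tfae_finish

/-- For `1 < p < ∞`, `α ≥ 0` and `0 < a < ∞`, the Hardy-type inequality
`∫_0^a f(t) t^{1/p-1} dt ≤ C (∫_0^a f(t)^p (1+log(a/t))^{αp} dt)^{1/p}` holds (with a
constant `C` independent of `f`) for every nonnegative decreasing measurable `f` on `(0,a)`
if and only if `α > 1 - 1/p`; equivalently, `L^p(log L)^α(E)` embeds into `L^{p,1}(E)`
if and only if `α > 1 - 1/p`. -/
theorem zygmund_embeds_into_lorentz_iff (p α a : ℝ) (hp : 1 < p) (hα : 0 ≤ α) (ha : 0 < a) :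
    (∃ C : ℝ, 0 < C ∧ ∀ f : ℝ → ℝ≥0∞, Measurable f → AntitoneOn f (Set.Ioo 0 a) →
        ∫⁻ t in Set.Ioo (0 : ℝ) a, f t * ENNReal.ofReal (t ^ (1 / p - 1)) ≤
          ENNReal.ofReal C *
            (∫⁻ t in Set.Ioo (0 : ℝ) a,
              f t ^ p * ENNReal.ofReal ((1 + Real.log (a / t)) ^ (α * p))) ^ (1 / p)) ↔
      1 - 1 / p < α :=
  (zygmund_embeds_into_lorentz_iff_general p α a hp ha).out 1 2
end
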